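/- (1D subsolution.) Let N = 1, Ω = (0,∞), s ∈ (1/2,1), and let L_Ω be either the operator L_Ω u(x) = PV ∫_0^∞ (u(x)−u(y)) K_Ω(x,y) dy with K_Ω(x,y) = c_{1,s}|x−y|^{−1−2s} + k_Ω(x,y), or the regional fractional Laplacian L_Ω u(x) = c_{1,s} PV ∫_0^∞ (u(x)−u(y))|x−y|^{−1−2s} dy. Fix r₀ > 0, let η ∈ C_0^∞([0,2r₀)) satisfy 0 ≤ η ≤ 1 and η = 1 on [0,r₀], and let ζ ∈ C_0^∞((r₀,2r₀)) satisfy 0 ≤ ζ ≤ 1 and ζ ≢ 0. Then for any c̲ ≥ 0 there exists M > 0, depending only on c̲, s and r₀, such that the function φ̲(x) := η(x) x^{2s−1} + M ζ(x) satisfies L_Ω φ̲(x) ≤ −c̲ for all x ∈ (0,r₀). Moreover, in the case of the kernel K_Ω = c_{1,s}|x−y|^{−1−2s} + k_Ω, the stronger bound L_Ω φ̲(x) ≤ −c̲ (1 + log^−(x/r₀)) holds for all x ∈ (0,r₀). -/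

import Mathlib

open MeasureTheory Metric Set Filter Topology
open scoped ENNReal NNReal

noncomputable section

/-- The normalizing constant `c_{N,s}` of the fractional Laplacian. -/
def cNs (N : ℕ) (s : ℝ) : ℝ :=
  (2:ℝ) ^ (2 * s) * Real.Gamma ((N : ℝ) / 2 + s) /
    (Real.pi ^ ((N : ℝ) / 2) * |Real.Gamma (-s)|)

/-- `log⁻ t = max 0 (−log t)`. -/
def logNeg (t : ℝ) : ℝ := max 0 (-Real.log t)

/-- The one-dimensional kernel `k_Ω` for `Ω = (0,∞)`. -/
def k1 (s : ℝ) (x y : ℝ) : ℝ :=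
  cNs 1 s * ∫ z in Set.Iic (0:ℝ),
    (|x - z| ^ (1 + 2 * s) * |y - z| ^ (1 + 2 * s) *
      ∫ w in Set.Ioi (0:ℝ), |z - w| ^ (-(1:ℝ) - 2 * s))⁻¹

/-- The one-dimensional kernel `K_Ω = c_{1,s}|x-y|^{-1-2s} + k_Ω(x,y)` of the Neumann
problem for the fractional Laplacian on `Ω = (0,∞)`. -/
def neumannKer1 (s : ℝ) (x y : ℝ) : ℝ :=
  cNs 1 s * |x - y| ^ (-(1:ℝ) - 2 * s) + k1 s x y

/-- The kernel of the one-dimensional regional fractional Laplacian on `(0,∞)`. -/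
def regionalKer1 (s : ℝ) (x y : ℝ) : ℝ :=
  cNs 1 s * |x - y| ^ (-(1:ℝ) - 2 * s)

/-- `L_Ω u (x) = PV ∫_0^∞ (u(x)-u(y)) K(x,y) dy` exists and has value `l`. -/
def HasPV1 (K : ℝ → ℝ → ℝ) (u : ℝ → ℝ) (x l : ℝ) : Prop :=
  Filter.Tendsto
    (fun ε : ℝ => ∫ y in {y : ℝ | 0 < y ∧ ε < |x - y|}, (u x - u y) * K x y)
    (𝓝[>] (0:ℝ)) (𝓝 l)

/-- The bilinear form on `(0,∞) × (0,∞)` associated with a kernel. -/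
def BForm1 (K : ℝ → ℝ → ℝ) (u v : ℝ → ℝ) : ℝ :=
  ∫ x in Set.Ioi (0:ℝ), ∫ y in Set.Ioi (0:ℝ), (u x - u y) * (v x - v y) * K x y

/-- `α` is an admissible exponent of the one-dimensional boundary regularity theorem
(Theorem `Thm:BoundaryRegBH`) for the operator with kernel `K` on `(0,∞)`: every
solution `u` of `L u = f` on `(0,2R)` with `u(0) = 0`, `f ∈ L^∞`, and growth
`|u(y)| ≤ c₀ (1 + y^{2s-ε₀})` with `ε₀ > 1`, satisfies the corresponding interior-to-boundary
`C^α` estimate for `u(x)/x^{2s-1}`. -/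
def BoundaryRegExponent (s : ℝ) (K : ℝ → ℝ → ℝ) (α : ℝ) : Prop :=
  α ∈ Set.Ioo (0:ℝ) 1 ∧
    ∀ c₀ > (0:ℝ), ∀ ε₀ > (1:ℝ), ∃ C > (0:ℝ), ∀ R > (0:ℝ), ∀ u f : ℝ → ℝ,
      (∀ x ∈ Set.Ioo (0:ℝ) (2 * R), HasPV1 K u x (f x)) → u 0 = 0 →
      (∀ y > (0:ℝ), |u y| ≤ c₀ * (1 + y ^ (2 * s - ε₀))) →
      ∀ Mu Mf : ℝ, (∀ x ∈ Set.Ioo (0:ℝ) (2 * R), |u x| ≤ Mu) →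
        (∀ x ∈ Set.Ioo (0:ℝ) (2 * R), |f x| ≤ Mf) →
        ∀ x ∈ Set.Ioc (0:ℝ) R, ∀ y ∈ Set.Ioc (0:ℝ) R,
          |u x / x ^ (2 * s - 1) - u y / y ^ (2 * s - 1)| ≤
            C * R ^ (1 - 2 * s) * (|x - y| / R) ^ α * (Mu + R ^ (2 * s) * Mf)

end
noncomputable section

/-!
With `α = 2s`, the function `t ^ (α - 1)` has vanishing principal value integral for both kernels.
For `|x - y| ^ (-1 - α)` the integrand has the explicit primitive
`|x ^ α - y ^ α| * |x - y| ^ (-α) / (α * x)`, so the truncated integral is a second difference of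
`t ^ α` at `x`, of order `ε ^ (2 - α)`. For `k_Ω` the integral converges absolutely and is computed
by Tonelli.

Replacing `t ^ (α - 1)` by `η(t) * t ^ (α - 1) + M * ζ(t)` changes nothing on `(0, r)`, so there
`L_Ω φ̲(x)` is the integral of `(1 - η(y)) * y ^ (α - 1) * K(x, y)` minus `M` times that of
`ζ(y) * K(x, y)`. The first is at most `a * w(x)` and the second at least `b * w(x)` with `b > 0`,
where `w = 1` for the regional kernel and `w(x) = 1 + log (r / x)` for `K_Ω`, the rate at which
`k_Ω(x, y)` blows up as `x → 0`. It remains to take `M` large.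
-/

section QuadraticContact

variable {f : ℝ → ℝ} {a α : ℝ}

lemma isBigO_sub_sq_of_deriv_eq_zero (hf : ContDiffAt ℝ 2 f a) (hd : deriv f a = 0) :
    (fun x => f x - f a) =O[𝓝 a] fun x => (x - a) ^ 2 := by
  obtain ⟨u, hu, hfu⟩ := hf.contDiffOn le_rfl (by simp)
  obtain ⟨δ, hδ, hδu⟩ := Metric.mem_nhds_iff.1 (by simpa using hu : u ∈ 𝓝 a)
  have taylor := taylor_isLittleO (n := 2) (convex_ball a δ) (mem_ball_self hδ) (hfu.mono hδu)
  have hderiv : derivWithin f (ball a δ) a = 0 := by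
    rw [derivWithin_of_isOpen isOpen_ball (mem_ball_self hδ), hd]
  have quadratic : (fun x => taylorWithinEval f 2 (ball a δ) a x - f a) =O[𝓝 a]
      fun x => (x - a) ^ 2 := by
    have heval : (fun x => taylorWithinEval f 2 (ball a δ) a x - f a) =
        fun x => (2⁻¹ * iteratedDerivWithin 2 f (ball a δ) a) * (x - a) ^ 2 := by
      ext x
      simp only [taylorWithinEval_succ, taylor_within_zero_eval, iteratedDerivWithin_one, hderiv,
        CharP.cast_eq_zero, zero_add, Nat.factorial_zero, Nat.factorial_one, Nat.cast_one, mul_one,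
        inv_one, pow_one, one_mul, smul_eq_mul, mul_zero, add_zero, Nat.reduceAdd,
        add_sub_cancel_left]
      ring
    rw [heval]
    exact Asymptotics.isBigO_const_mul_self _ _ _
  rw [isOpen_ball.nhdsWithin_eq (mem_ball_self hδ)] at taylor
  simpa using taylor.isBigO.add quadratic

lemma tendsto_second_difference_mul_rpow (hf : ContDiffAt ℝ 2 f a) (hα : α < 2) :
    Tendsto (fun ε => (2 * f a - f (a - ε) - f (a + ε)) * ε ^ (-α)) (𝓝[>] 0) (𝓝 0) := by
  set g : ℝ → ℝ := fun ε => f (a - ε) + f (a + ε) with hg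
  have hf₁ : ContDiffAt ℝ 2 f (a - 0) := by simpa using hf
  have hf₂ : ContDiffAt ℝ 2 f (a + 0) := by simpa using hf
  have hgsmooth : ContDiffAt ℝ 2 g 0 :=
    (hf₁.comp (0 : ℝ) (by fun_prop)).add (hf₂.comp (0 : ℝ) (by fun_prop))
  have hgderiv : deriv g 0 = 0 := by
    have h₁ := (hf₁.differentiableAt (by simp)).hasDerivAt.comp_const_sub a 0
    have h₂ := (hf₂.differentiableAt (by simp)).hasDerivAt.comp_const_add a 0
    refine (h₁.add h₂).deriv.trans ?_
    simp
  have hdiff : (fun ε => 2 * f a - f (a - ε) - f (a + ε)) =O[𝓝[>] 0] fun ε => ε ^ 2 := by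
    have h := (isBigO_sub_sq_of_deriv_eq_zero hgsmooth hgderiv).neg_left.mono
      (nhdsWithin_le_nhds (s := Ioi 0))
    simp only [sub_zero] at h
    refine h.congr_left fun ε => ?_
    simp only [hg, sub_zero, add_zero]
    ring
  have hbound : (fun ε => (2 * f a - f (a - ε) - f (a + ε)) * ε ^ (-α))
      =O[𝓝[>] 0] fun ε => ε ^ (2 - α) := by
    refine (hdiff.mul (Asymptotics.isBigO_refl (fun ε : ℝ => ε ^ (-α)) _)).congr' .rfl ?_
    filter_upwards [self_mem_nhdsWithin] with ε hε
    rw [sub_eq_add_neg, Real.rpow_add hε, Real.rpow_two]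
  refine hbound.trans_tendsto ?_
  have h : Tendsto (fun ε : ℝ => ε ^ (2 - α)) (𝓝 0) (𝓝 (0 ^ (2 - α))) :=
    tendsto_id.rpow_const (Or.inr (by linarith))
  rw [Real.zero_rpow (by linarith)] at h
  exact h.mono_left nhdsWithin_le_nhds

end QuadraticContact

section PrincipalValue

/-- The half-line with the ball of radius `ε` about `x` removed: the domain of integration of the
truncated integrals in `HasPV1`. -/
def truncatedHalfLine (x ε : ℝ) : Set ℝ := {y | 0 < y ∧ ε < |x - y|}

/-- `PV ∫_0^∞ (u(x) - u(y)) K(x,y) dy = 0`, with absolutely convergent truncated integrals. Bochner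
integrals of non-integrable functions being `0`, the condition
`integrableOn` is what allows adding principal values. -/
structure IsPVHarmonicAt (K : ℝ → ℝ → ℝ) (u : ℝ → ℝ) (x : ℝ) : Prop where
  integrableOn : ∀ᶠ ε in 𝓝[>] (0 : ℝ),
    IntegrableOn (fun y => (u x - u y) * K x y) (truncatedHalfLine x ε)
  hasPV1 : HasPV1 K u x 0

variable {K K₁ K₂ : ℝ → ℝ → ℝ} {u v f : ℝ → ℝ} {x ε : ℝ}

lemma measurableSet_truncatedHalfLine : MeasurableSet (truncatedHalfLine x ε) :=
  measurableSet_Ioi.inter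
    (measurableSet_lt measurable_const (measurable_const.sub measurable_id).abs)

lemma truncatedHalfLine_subset_Ioi : truncatedHalfLine x ε ⊆ Ioi 0 := fun _ hy => hy.1

lemma truncatedHalfLine_eq_union (hε : 0 < ε) (hεx : ε < x) :
    truncatedHalfLine x ε = Ioo 0 (x - ε) ∪ Ioi (x + ε) := by
  ext y
  simp only [truncatedHalfLine, mem_ofPred_eq, mem_union, mem_Ioo, mem_Ioi, lt_abs]
  grind

lemma tendsto_setIntegral_truncatedHalfLine (hf : IntegrableOn f (Ioi 0)) (x : ℝ) :
    Tendsto (fun ε => ∫ y in truncatedHalfLine x ε, f y) (𝓝[>] 0) (𝓝 (∫ y in Ioi 0, f y)) := by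
  have hmeas (ε : ℝ) : MeasurableSet {y | ε < |x - y|} :=
    measurableSet_lt measurable_const (by fun_prop)
  have hindicator (ε : ℝ) : ∫ y in truncatedHalfLine x ε, f y =
      ∫ y in Ioi 0, {y | ε < |x - y|}.indicator f y := by
    rw [setIntegral_indicator (hmeas ε)]
    rfl
  simp only [hindicator]
  refine tendsto_integral_filter_of_dominated_convergence (fun y => ‖f y‖)
    (.of_forall fun ε => hf.aestronglyMeasurable.indicator (hmeas ε))
    (.of_forall fun ε => .of_forall fun y => norm_indicator_le_norm_self f y) hf.norm ?_
  filter_upwards [ae_restrict_of_ae (Measure.ae_ne volume x)] with y hy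
  refine tendsto_const_nhds.congr' ?_
  filter_upwards [Ioo_mem_nhdsGT (abs_pos.2 (sub_ne_zero.2 hy.symm))] with ε hε
  rw [indicator_of_mem]
  exact hε.2

lemma isPVHarmonicAt_of_integral_eq_zero
    (hint : IntegrableOn (fun y => (u x - u y) * K x y) (Ioi 0))
    (hzero : ∫ y in Ioi 0, (u x - u y) * K x y = 0) : IsPVHarmonicAt K u x where
  integrableOn := .of_forall fun _ => hint.mono_set truncatedHalfLine_subset_Ioi
  hasPV1 := hzero ▸ tendsto_setIntegral_truncatedHalfLine hint x

namespace HasPV1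

variable {l : ℝ}

lemma congr_kernel (h : HasPV1 K₁ u x l) (hK : EqOn (K₁ x) (K₂ x) (Ioi 0)) : HasPV1 K₂ u x l :=
  Tendsto.congr (fun _ => setIntegral_congr_fun measurableSet_truncatedHalfLine fun y hy => by
    simp only [hK (truncatedHalfLine_subset_Ioi hy)]) h

lemma const_mul (h : HasPV1 K u x l) (c : ℝ) : HasPV1 (fun x y => c * K x y) u x (c * l) := by
  simpa only [HasPV1, mul_left_comm _ c, integral_const_mul] using Tendsto.const_mul c h

end HasPV1

namespace IsPVHarmonicAt

lemma add (h₁ : IsPVHarmonicAt K₁ u x) (h₂ : IsPVHarmonicAt K₂ u x) :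
    IsPVHarmonicAt (fun x y => K₁ x y + K₂ x y) u x where
  integrableOn := by
    filter_upwards [h₁.integrableOn, h₂.integrableOn] with ε hε₁ hε₂
    simp only [mul_add]
    exact hε₁.add hε₂
  hasPV1 := by
    have hlim := h₁.hasPV1.add h₂.hasPV1
    rw [add_zero] at hlim
    refine hlim.congr' ?_
    filter_upwards [h₁.integrableOn, h₂.integrableOn] with ε hε₁ hε₂
    simp only [mul_add]
    exact (integral_add hε₁ hε₂).symm

lemma hasPV1_add (h : IsPVHarmonicAt K u x) (hv : v x = 0)
    (hvK : IntegrableOn (fun y => v y * K x y) (Ioi 0)) :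
    HasPV1 K (fun t => u t + v t) x (-∫ y in Ioi 0, v y * K x y) := by
  have hlim := h.hasPV1.sub (tendsto_setIntegral_truncatedHalfLine hvK x)
  rw [zero_sub] at hlim
  refine hlim.congr' ?_
  filter_upwards [h.integrableOn] with ε hε
  refine (integral_sub hε (hvK.mono_set truncatedHalfLine_subset_Ioi)).symm.trans ?_
  refine integral_congr_ae (.of_forall fun y => ?_)
  simp only [hv]
  ring

end IsPVHarmonicAt

end PrincipalValue

section RpowIntegrals

variable {α x ε : ℝ}

lemma hasDerivAt_sub_rpow_mul_sub_rpow_left {y : ℝ} (hα : α ≠ 0) (hy : 0 < y) (hyx : y < x) :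
    HasDerivAt (fun y => (x ^ α - y ^ α) * (x - y) ^ (-α) / (α * x))
      ((x ^ (α - 1) - y ^ (α - 1)) * |x - y| ^ (-(1 : ℝ) - α)) y := by
  have hx : 0 < x := hy.trans hyx
  have hxy : 0 < x - y := sub_pos.2 hyx
  have h₁ := ((hasDerivAt_id y).rpow_const (p := α) (Or.inl hy.ne')).const_sub (x ^ α)
  have h₂ := ((hasDerivAt_id y).const_sub x).rpow_const (p := -α) (Or.inl hxy.ne')
  refine ((h₁.mul h₂).div_const (α * x)).congr_deriv ?_
  simp only [id]
  rw [abs_of_pos hxy, neg_sub_comm 1 α, Real.rpow_sub_one hxy.ne', Real.rpow_sub_one hx.ne',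
    Real.rpow_sub_one hy.ne']
  field_simp
  ring

lemma hasDerivAt_sub_rpow_mul_sub_rpow_right {y : ℝ} (hα : α ≠ 0) (hx : 0 < x) (hxy : x < y) :
    HasDerivAt (fun y => (y ^ α - x ^ α) * (y - x) ^ (-α) / (α * x))
      ((x ^ (α - 1) - y ^ (α - 1)) * |x - y| ^ (-(1 : ℝ) - α)) y := by
  have hy : 0 < y := hx.trans hxy
  have hyx : 0 < y - x := sub_pos.2 hxy
  have h₁ := ((hasDerivAt_id y).rpow_const (p := α) (Or.inl hy.ne')).sub_const (x ^ α)
  have h₂ := ((hasDerivAt_id y).sub_const x).rpow_const (p := -α) (Or.inl hyx.ne')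
  refine ((h₁.mul h₂).div_const (α * x)).congr_deriv ?_
  simp only [id]
  rw [abs_sub_comm, abs_of_pos hyx, neg_sub_comm 1 α, Real.rpow_sub_one hyx.ne',
    Real.rpow_sub_one hx.ne', Real.rpow_sub_one hy.ne']
  field_simp
  ring

lemma integrableOn_and_integral_rpow_sub_Ioo (hα : 1 ≤ α) (hε : 0 < ε) (hεx : ε < x) :
    IntegrableOn (fun y => (x ^ (α - 1) - y ^ (α - 1)) * |x - y| ^ (-(1 : ℝ) - α))
      (Ioo 0 (x - ε)) ∧
    ∫ y in Ioo 0 (x - ε), (x ^ (α - 1) - y ^ (α - 1)) * |x - y| ^ (-(1 : ℝ) - α) =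
      (x ^ α - (x - ε) ^ α) * ε ^ (-α) / (α * x) - 1 / (α * x) := by
  have hx : 0 < x := hε.trans hεx
  have hle : 0 ≤ x - ε := sub_nonneg.2 hεx.le
  have hne : ∀ y ∈ Icc 0 (x - ε), x - y ≠ 0 := fun y hy => by linarith [hy.2]
  have hpow {β : ℝ} (hβ : 0 ≤ β) : ContinuousOn (fun y : ℝ => x ^ β - y ^ β) (Icc 0 (x - ε)) :=
    continuousOn_const.sub (continuousOn_id.rpow_const fun _ _ => Or.inr hβ)
  have hint : IntegrableOn (fun y => (x ^ (α - 1) - y ^ (α - 1)) * |x - y| ^ (-(1 : ℝ) - α))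
      (Icc 0 (x - ε)) :=
    ((hpow (by linarith)).mul (ContinuousOn.rpow_const (by fun_prop)
      fun y hy => Or.inl (abs_ne_zero.2 (hne y hy)))).integrableOn_Icc
  refine ⟨hint.mono_set Ioo_subset_Icc_self, ?_⟩
  rw [← integral_Ioc_eq_integral_Ioo, ← intervalIntegral.integral_of_le hle,
    intervalIntegral.integral_eq_sub_of_hasDerivAt_of_le
      (f := fun y => (x ^ α - y ^ α) * (x - y) ^ (-α) / (α * x)) hle
      (((hpow (by linarith)).mul (ContinuousOn.rpow_const (by fun_prop)
        fun y hy => Or.inl (hne y hy))).div_const _)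
      (fun y hy => hasDerivAt_sub_rpow_mul_sub_rpow_left (by linarith) hy.1 (by linarith [hy.2]))
      ((intervalIntegrable_iff_integrableOn_Icc_of_le hle).2 hint)]
  simp only [Real.zero_rpow (show α ≠ 0 by linarith), sub_zero, sub_sub_cancel]
  rw [Real.rpow_neg hx.le, mul_inv_cancel₀ (by positivity)]

lemma tendsto_rpow_sub_mul_rpow_neg_atTop (hα : 0 < α) (x : ℝ) :
    Tendsto (fun y => (y ^ α - x ^ α) * (y - x) ^ (-α)) atTop (𝓝 1) := by
  have hshift : Tendsto (fun y : ℝ => y - x) atTop atTop :=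
    tendsto_atTop_add_const_right atTop (-x) tendsto_id
  have hratio : Tendsto (fun y => (1 + x / (y - x)) ^ α) atTop (𝓝 ((1 + 0) ^ α)) :=
    (tendsto_const_nhds.add (tendsto_const_nhds.div_atTop hshift)).rpow_const (Or.inr hα.le)
  have hrest : Tendsto (fun y => x ^ α * (y - x) ^ (-α)) atTop (𝓝 (x ^ α * 0)) :=
    ((tendsto_rpow_neg_atTop hα).comp hshift).const_mul _
  have hlim := hratio.sub hrest
  simp only [add_zero, Real.one_rpow, mul_zero, sub_zero] at hlim
  refine hlim.congr' ?_
  filter_upwards [eventually_gt_atTop x, eventually_gt_atTop 0] with y hxy hy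
  have hyx : 0 < y - x := sub_pos.2 hxy
  rw [one_add_div hyx.ne', sub_add_cancel, Real.div_rpow hy.le hyx.le, Real.rpow_neg hyx.le]
  ring

lemma integrableOn_and_integral_rpow_sub_Ioi (hα : 1 ≤ α) (hε : 0 < ε) (hx : 0 < x) :
    IntegrableOn (fun y => (x ^ (α - 1) - y ^ (α - 1)) * |x - y| ^ (-(1 : ℝ) - α))
      (Ioi (x + ε)) ∧
    ∫ y in Ioi (x + ε), (x ^ (α - 1) - y ^ (α - 1)) * |x - y| ^ (-(1 : ℝ) - α) =
      1 / (α * x) - ((x + ε) ^ α - x ^ α) * ε ^ (-α) / (α * x) := by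
  have hderiv : ∀ y ∈ Ici (x + ε), HasDerivAt (fun y => (y ^ α - x ^ α) * (y - x) ^ (-α) / (α * x))
      ((x ^ (α - 1) - y ^ (α - 1)) * |x - y| ^ (-(1 : ℝ) - α)) y := fun y hy =>
    hasDerivAt_sub_rpow_mul_sub_rpow_right (by linarith) hx (by linarith [mem_Ici.1 hy])
  have hderiv_Ioi := fun y (hy : y ∈ Ioi (x + ε)) => hderiv y (Ioi_subset_Ici_self hy)
  have hcont := (hderiv (x + ε) self_mem_Ici).continuousAt.continuousWithinAt (s := Ici (x + ε))
  have hnonpos : ∀ y ∈ Ioi (x + ε),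
      (x ^ (α - 1) - y ^ (α - 1)) * |x - y| ^ (-(1 : ℝ) - α) ≤ 0 := fun y hy =>
    mul_nonpos_of_nonpos_of_nonneg (sub_nonpos.2 (Real.rpow_le_rpow hx.le
      (by linarith [mem_Ioi.1 hy]) (by linarith))) (by positivity)
  have hlim := (tendsto_rpow_sub_mul_rpow_neg_atTop (zero_lt_one.trans_le hα) x).div_const (α * x)
  refine ⟨integrableOn_Ioi_deriv_of_nonpos hcont hderiv_Ioi hnonpos hlim, ?_⟩
  rw [integral_Ioi_of_hasDerivAt_of_nonpos hcont hderiv_Ioi hnonpos hlim, add_sub_cancel_left]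

lemma isPVHarmonicAt_rpow (hα₁ : 1 ≤ α) (hα₂ : α < 2) (hx : 0 < x) :
    IsPVHarmonicAt (fun x y => |x - y| ^ (-(1 : ℝ) - α)) (fun t => t ^ (α - 1)) x := by
  have hdisjoint {ε : ℝ} (hε : 0 < ε) : Disjoint (Ioo 0 (x - ε)) (Ioi (x + ε)) :=
    Set.disjoint_left.2 fun y h₁ h₂ => by linarith [h₁.2, mem_Ioi.1 h₂]
  constructor
  · filter_upwards [Ioo_mem_nhdsGT hx] with ε hε
    rw [truncatedHalfLine_eq_union hε.1 hε.2]
    exact (integrableOn_and_integral_rpow_sub_Ioo hα₁ hε.1 hε.2).1.union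
      (integrableOn_and_integral_rpow_sub_Ioi hα₁ hε.1 hx).1
  · have hlim := (tendsto_second_difference_mul_rpow
      (Real.contDiffAt_rpow_const_of_ne (p := α) hx.ne') hα₂).div_const (α * x)
    rw [zero_div] at hlim
    refine hlim.congr' ?_
    filter_upwards [Ioo_mem_nhdsGT hx] with ε hε
    obtain ⟨hleft, hleft_eq⟩ := integrableOn_and_integral_rpow_sub_Ioo hα₁ hε.1 hε.2
    obtain ⟨hright, hright_eq⟩ := integrableOn_and_integral_rpow_sub_Ioi hα₁ hε.1 hx
    change _ = ∫ y in truncatedHalfLine x ε, _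
    rw [truncatedHalfLine_eq_union hε.1 hε.2,
      setIntegral_union (hdisjoint hε.1) measurableSet_Ioi hleft hright, hleft_eq, hright_eq]
    ring

end RpowIntegrals

section ComplementKernel

variable {α x y : ℝ}

/-- The kernel `k_Ω` of the half-line without its normalizing constant, for `α = 2s`: the inner
integral of `k1` is evaluated and the outer one is reflected to `z > 0`. -/
def complementKernel (α x y : ℝ) : ℝ :=
  ∫ z in Ioi (0 : ℝ), α * z ^ α * (z + x) ^ (-(1 : ℝ) - α) * (y + z) ^ (-(1 : ℝ) - α)

lemma integral_Ioi_add_rpow_neg_one_sub {a : ℝ} (hα : 0 < α) (ha : 0 < a) :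
    ∫ y in Ioi (0 : ℝ), (y + a) ^ (-(1 : ℝ) - α) = a ^ (-α) / α := by
  have hderiv : ∀ y ∈ Ici (0 : ℝ), HasDerivAt (fun y => -((y + a) ^ (-α) / α))
      ((y + a) ^ (-(1 : ℝ) - α)) y := by
    intro y hy
    have hya : y + a ≠ 0 := by linarith [mem_Ici.1 hy]
    refine ((((hasDerivAt_id y).add_const a).rpow_const (p := -α)
      (Or.inl hya)).div_const α).neg.congr_deriv ?_
    rw [neg_sub_comm 1 α]
    simp only [id]
    field_simp
  have hlim : Tendsto (fun y => -((y + a) ^ (-α) / α)) atTop (𝓝 0) := by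
    simpa using (((tendsto_rpow_neg_atTop hα).comp
      (tendsto_atTop_add_const_right atTop a tendsto_id)).div_const α).neg
  rw [integral_Ioi_of_hasDerivAt_of_tendsto' hderiv
    (integrableOn_add_rpow_Ioi_of_lt (by linarith) (by linarith)) hlim]
  simp

lemma hasDerivAt_div_add_rpow {a : ℝ} (hα : α ≠ 0) (ha : 0 < a) (hy : 0 < y) :
    HasDerivAt (fun y => (y / (y + a)) ^ α / (α * a))
      (y ^ (α - 1) * (y + a) ^ (-(1 : ℝ) - α)) y := by
  have hya : 0 < y + a := by positivity
  have hquot := (hasDerivAt_id y).div ((hasDerivAt_id y).add_const a) hya.ne'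
  refine ((hquot.rpow_const (p := α) (Or.inl (div_pos hy hya).ne')).div_const
    (α * a)).congr_deriv ?_
  simp only [id, Pi.div_apply]
  rw [Real.div_rpow hy.le hya.le, show -(1 : ℝ) - α = -(α - 1) - (2 : ℕ) by push_cast; ring,
    Real.rpow_sub_natCast hya.ne', Real.rpow_neg hya.le]
  field_simp
  ring

lemma integrableOn_and_integral_rpow_mul_add_rpow {a c : ℝ} (hα : 0 < α) (ha : 0 < a)
    (hc : 0 ≤ c) :
    IntegrableOn (fun y => y ^ (α - 1) * (y + a) ^ (-(1 : ℝ) - α)) (Ioi c) ∧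
    ∫ y in Ioi c, y ^ (α - 1) * (y + a) ^ (-(1 : ℝ) - α) = (1 - (c / (c + a)) ^ α) / (α * a) := by
  have hcont : ContinuousWithinAt (fun y => (y / (y + a)) ^ α / (α * a)) (Ici c) c :=
    ((ContinuousAt.rpow_const (by fun_prop (disch := positivity))
      (Or.inr hα.le)).div_const _).continuousWithinAt
  have hderiv : ∀ y ∈ Ioi c, HasDerivAt (fun y => (y / (y + a)) ^ α / (α * a))
      (y ^ (α - 1) * (y + a) ^ (-(1 : ℝ) - α)) y := fun y hy =>
    hasDerivAt_div_add_rpow hα.ne' ha (hc.trans_lt hy)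
  have hnonneg : ∀ y ∈ Ioi c, 0 ≤ y ^ (α - 1) * (y + a) ^ (-(1 : ℝ) - α) := fun y hy => by
    have : 0 < y := hc.trans_lt hy
    positivity
  have hratio : Tendsto (fun y => y / (y + a)) atTop (𝓝 1) := by
    have h : Tendsto (fun y => 1 - a / (y + a)) atTop (𝓝 (1 - 0)) :=
      tendsto_const_nhds.sub (tendsto_const_nhds.div_atTop
        (tendsto_atTop_add_const_right atTop a tendsto_id))
    rw [sub_zero] at h
    refine h.congr' ?_
    filter_upwards [eventually_gt_atTop 0] with y hy
    rw [one_sub_div (by positivity), add_sub_cancel_right]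
  have hlim : Tendsto (fun y => (y / (y + a)) ^ α / (α * a)) atTop (𝓝 (1 / (α * a))) := by
    simpa using (hratio.rpow_const (p := α) (Or.inr hα.le)).div_const (α * a)
  refine ⟨integrableOn_Ioi_deriv_of_nonneg hcont hderiv hnonneg hlim, ?_⟩
  rw [integral_Ioi_of_hasDerivAt_of_nonneg hcont hderiv hnonneg hlim, sub_div]

lemma k1_eq_mul_complementKernel {s : ℝ} (hs : 0 < s) (hx : 0 < x) (hy : 0 < y) :
    k1 s x y = cNs 1 s * complementKernel (2 * s) x y := by
  have hreflect := integral_comp_neg_Iic (0 : ℝ) fun z =>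
    (|x + z| ^ (1 + 2 * s) * |y + z| ^ (1 + 2 * s) *
      ∫ w in Ioi (0 : ℝ), |-z - w| ^ (-(1 : ℝ) - 2 * s))⁻¹
  simp only [neg_neg, ← sub_eq_add_neg, neg_zero] at hreflect
  rw [k1, complementKernel, hreflect]
  congr 1
  refine setIntegral_congr_fun measurableSet_Ioi fun z (hz : 0 < z) => ?_
  have hinner : ∫ w in Ioi (0 : ℝ), |-z - w| ^ (-(1 : ℝ) - 2 * s) = z ^ (-(2 * s)) / (2 * s) := by
    rw [← integral_Ioi_add_rpow_neg_one_sub (by positivity) hz]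
    refine setIntegral_congr_fun measurableSet_Ioi fun w (hw : 0 < w) => ?_
    rw [show -z - w = -(w + z) by ring, abs_neg, abs_of_pos (by positivity)]
  simp only [hinner]
  rw [abs_of_pos (by positivity), abs_of_pos (by positivity),
    show -(1 : ℝ) - 2 * s = -(1 + 2 * s) by ring, Real.rpow_neg (by positivity),
    Real.rpow_neg (by positivity), Real.rpow_neg (by positivity), add_comm z x]
  have : 0 < z ^ (2 * s) := by positivity
  field_simp

lemma rpow_mul_add_rpow_neg_one_sub_le {z : ℝ} (hα : 0 ≤ α) (hx : 0 < x) (hz : 0 < z) :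
    z ^ α * (z + x) ^ (-(1 : ℝ) - α) ≤ (z + x)⁻¹ := by
  calc z ^ α * (z + x) ^ (-(1 : ℝ) - α) ≤ (z + x) ^ α * (z + x) ^ (-(1 : ℝ) - α) := by
        gcongr
        linarith
    _ = (z + x)⁻¹ := by
        rw [← Real.rpow_add (by positivity), ← Real.rpow_neg_one, add_sub_cancel]

lemma integrableOn_complementKernel_integrand (hα : 0 < α) (hx : 0 < x) (hy : 0 < y) :
    IntegrableOn (fun z => α * z ^ α * (z + x) ^ (-(1 : ℝ) - α) * (y + z) ^ (-(1 : ℝ) - α))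
      (Ioi 0) := by
  have hdom : IntegrableOn (fun z => α * x⁻¹ * (z + y) ^ (-(1 : ℝ) - α)) (Ioi 0) :=
    (integrableOn_add_rpow_Ioi_of_lt (by linarith) (by linarith)).const_mul _
  refine hdom.mono' (Measurable.aestronglyMeasurable (by fun_prop)) ?_
  filter_upwards [ae_restrict_mem measurableSet_Ioi] with z (hz : 0 < z)
  rw [Real.norm_of_nonneg (by positivity), add_comm y z, mul_assoc α]
  gcongr
  refine (rpow_mul_add_rpow_neg_one_sub_le hα.le hx hz).trans ?_
  gcongr
  linarith

lemma complementKernel_nonneg (hα : 0 ≤ α) (hx : 0 < x) (hy : 0 < y) :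
    0 ≤ complementKernel α x y :=
  setIntegral_nonneg measurableSet_Ioi fun z (hz : 0 < z) => by positivity

lemma antitoneOn_complementKernel (hα : 0 < α) (hx : 0 < x) :
    AntitoneOn (complementKernel α x) (Ioi 0) := by
  intro y (hy : 0 < y) y' (hy' : 0 < y') hyy'
  refine setIntegral_mono_on (integrableOn_complementKernel_integrand hα hx hy')
    (integrableOn_complementKernel_integrand hα hx hy) measurableSet_Ioi fun z (hz : 0 < z) => ?_
  gcongr ?_ * ?_
  exact Real.rpow_le_rpow_of_nonpos (by positivity) (by linarith) (by linarith)

lemma integrableOn_and_integral_mul_complementKernel {w : ℝ → ℝ} {S : Set ℝ} (hα : 0 ≤ α)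
    (hx : 0 < x) (hS : MeasurableSet S) (hSpos : S ⊆ Ioi 0) (hw : Measurable w)
    (hwpos : ∀ y ∈ S, 0 ≤ w y)
    (hinner : ∀ z ∈ Ioi (0 : ℝ), IntegrableOn (fun y => w y * (y + z) ^ (-(1 : ℝ) - α)) S)
    (houter : IntegrableOn (fun z => α * z ^ α * (z + x) ^ (-(1 : ℝ) - α) *
      ∫ y in S, w y * (y + z) ^ (-(1 : ℝ) - α)) (Ioi 0)) :
    IntegrableOn (fun y => w y * complementKernel α x y) S ∧
    ∫ y in S, w y * complementKernel α x y =
      ∫ z in Ioi (0 : ℝ), α * z ^ α * (z + x) ^ (-(1 : ℝ) - α) *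
        ∫ y in S, w y * (y + z) ^ (-(1 : ℝ) - α) := by
  set F : ℝ → ℝ → ℝ := fun y z =>
    α * z ^ α * (z + x) ^ (-(1 : ℝ) - α) * (w y * (y + z) ^ (-(1 : ℝ) - α)) with hF
  have hFnonneg : ∀ z ∈ Ioi (0 : ℝ), ∀ y ∈ S, 0 ≤ F y z := fun z (hz : 0 < z) y hy => by
    have hypos : 0 < y := hSpos hy
    have := hwpos y hy
    positivity
  have hFint : Integrable (Function.uncurry F)
      ((volume.restrict S).prod (volume.restrict (Ioi (0 : ℝ)))) := by
    refine (integrable_prod_iff' (Measurable.aestronglyMeasurable ?_)).2 ⟨?_, houter.congr ?_⟩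
    · simp only [hF, Function.uncurry_def]
      fun_prop
    · filter_upwards [ae_restrict_mem measurableSet_Ioi] with z hz
      exact (hinner z hz).const_mul (α * z ^ α * (z + x) ^ (-(1 : ℝ) - α))
    · filter_upwards [ae_restrict_mem measurableSet_Ioi] with z hz
      rw [← integral_const_mul]
      exact setIntegral_congr_fun hS fun y hy => (Real.norm_of_nonneg (hFnonneg z hz y hy)).symm
  have hkernel (y : ℝ) : w y * complementKernel α x y = ∫ z in Ioi (0 : ℝ), F y z := by
    rw [complementKernel, ← integral_const_mul]
    exact integral_congr_ae (.of_forall fun z => mul_left_comm _ _ _)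
  simp only [hkernel]
  refine ⟨hFint.integral_prod_left, ?_⟩
  rw [integral_integral_swap hFint]
  exact integral_congr_ae (.of_forall fun z => integral_const_mul _ _)

lemma integrableOn_and_integral_complementKernel (hα : 0 < α) (hx : 0 < x) :
    IntegrableOn (complementKernel α x) (Ioi 0) ∧
    ∫ y in Ioi (0 : ℝ), complementKernel α x y = x ^ (-α) / α := by
  have hinner : EqOn (fun z => (z + x) ^ (-(1 : ℝ) - α))
      (fun z => α * z ^ α * (z + x) ^ (-(1 : ℝ) - α) *
        ∫ y in Ioi (0 : ℝ), 1 * (y + z) ^ (-(1 : ℝ) - α)) (Ioi 0) := fun z (hz : 0 < z) => by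
    simp only [one_mul]
    rw [integral_Ioi_add_rpow_neg_one_sub hα hz, Real.rpow_neg hz.le]
    have : 0 < z ^ α := by positivity
    field_simp
  have htonelli := integrableOn_and_integral_mul_complementKernel (w := fun _ => 1) hα.le hx
    measurableSet_Ioi Subset.rfl measurable_const (fun _ _ => zero_le_one)
    (fun z (hz : 0 < z) => by
      simpa using integrableOn_add_rpow_Ioi_of_lt (by linarith) (by linarith))
    ((integrableOn_add_rpow_Ioi_of_lt (by linarith) (by linarith)).congr_fun hinner
      measurableSet_Ioi)
  rw [← setIntegral_congr_fun measurableSet_Ioi hinner,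
    integral_Ioi_add_rpow_neg_one_sub hα hx] at htonelli
  simpa using htonelli

lemma div_add_rpow_mem_Icc {c z : ℝ} (hα : 0 ≤ α) (hc : 0 ≤ c) (hz : 0 < z) :
    (c / (c + z)) ^ α ∈ Icc (0 : ℝ) 1 :=
  ⟨by positivity,
    Real.rpow_le_one (by positivity) ((div_le_one (by positivity)).2 (by linarith)) hα⟩

lemma integrableOn_and_integral_rpow_mul_complementKernel {c : ℝ} (hα : 0 < α) (hx : 0 < x)
    (hc : 0 ≤ c) :
    IntegrableOn (fun y => y ^ (α - 1) * complementKernel α x y) (Ioi c) ∧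
    ∫ y in Ioi c, y ^ (α - 1) * complementKernel α x y =
      ∫ z in Ioi (0 : ℝ), z ^ (α - 1) * (z + x) ^ (-(1 : ℝ) - α) * (1 - (c / (c + z)) ^ α) := by
  have hinner : EqOn
      (fun z => z ^ (α - 1) * (z + x) ^ (-(1 : ℝ) - α) * (1 - (c / (c + z)) ^ α))
      (fun z => α * z ^ α * (z + x) ^ (-(1 : ℝ) - α) *
        ∫ y in Ioi c, y ^ (α - 1) * (y + z) ^ (-(1 : ℝ) - α)) (Ioi 0) := fun z (hz : 0 < z) => by
    beta_reduce
    rw [(integrableOn_and_integral_rpow_mul_add_rpow hα hz hc).2, Real.rpow_sub_one hz.ne']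
    field_simp
  have houter : IntegrableOn
      (fun z => z ^ (α - 1) * (z + x) ^ (-(1 : ℝ) - α) * (1 - (c / (c + z)) ^ α)) (Ioi 0) := by
    refine (integrableOn_and_integral_rpow_mul_add_rpow hα hx le_rfl).1.mul_bdd (c := 1)
      (Measurable.aestronglyMeasurable (by fun_prop)) ?_
    filter_upwards [ae_restrict_mem measurableSet_Ioi] with z (hz : 0 < z)
    obtain ⟨hpos, hle⟩ := div_add_rpow_mem_Icc hα.le hc hz
    rw [Real.norm_of_nonneg] <;> linarith
  rw [setIntegral_congr_fun measurableSet_Ioi hinner]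
  exact integrableOn_and_integral_mul_complementKernel hα.le hx measurableSet_Ioi
    (Ioi_subset_Ioi hc) (by fun_prop) (fun y hy => Real.rpow_nonneg (hc.trans_lt hy).le _)
    (fun z hz => (integrableOn_and_integral_rpow_mul_add_rpow hα hz hc).1)
    (houter.congr_fun hinner measurableSet_Ioi)

lemma isPVHarmonicAt_complementKernel_rpow (hα : 0 < α) (hx : 0 < x) :
    IsPVHarmonicAt (complementKernel α) (fun t => t ^ (α - 1)) x := by
  obtain ⟨hint₁, hval₁⟩ := integrableOn_and_integral_complementKernel hα hx
  obtain ⟨hint₂, hval₂⟩ :=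
    integrableOn_and_integral_rpow_mul_complementKernel hα hx (le_refl (0 : ℝ))
  have hval₂' : ∫ y in Ioi (0 : ℝ), y ^ (α - 1) * complementKernel α x y = 1 / (α * x) := by
    simp only [hval₂, zero_div, Real.zero_rpow hα.ne', sub_zero, mul_one]
    rw [(integrableOn_and_integral_rpow_mul_add_rpow hα hx le_rfl).2]
    simp [Real.zero_rpow hα.ne']
  apply isPVHarmonicAt_of_integral_eq_zero
  · simp only [sub_mul]
    exact (hint₁.const_mul _).sub hint₂
  · simp only [sub_mul]
    rw [integral_sub (hint₁.const_mul _) hint₂, integral_const_mul, hval₁, hval₂',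
      Real.rpow_sub_one hx.ne', Real.rpow_neg hx.le]
    field_simp
    ring

lemma mul_log_le_complementKernel {r : ℝ} (hα : 0 < α) (hx : 0 < x) (hxr : x < r) (hy : 0 < y) :
    α * 2 ^ (-(1 : ℝ) - α) * (y + r) ^ (-(1 : ℝ) - α) * Real.log (r / x) ≤
      complementKernel α x y := by
  have hr : 0 < r := hx.trans hxr
  have hsub : Ioc x r ⊆ Ioi 0 := fun z hz => hx.trans hz.1
  have hint := integrableOn_complementKernel_integrand hα hx hy
  have hinv : IntegrableOn (fun z : ℝ => z⁻¹) (Ioc x r) :=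
    (continuousOn_inv₀.mono fun z hz => (hx.trans_le hz.1).ne').integrableOn_Icc.mono_set
      Ioc_subset_Icc_self
  have hpointwise : ∀ z ∈ Ioc x r, α * 2 ^ (-(1 : ℝ) - α) * (y + r) ^ (-(1 : ℝ) - α) * z⁻¹ ≤
      α * z ^ α * (z + x) ^ (-(1 : ℝ) - α) * (y + z) ^ (-(1 : ℝ) - α) := fun z ⟨hxz, hzr⟩ => by
    have hz : 0 < z := hx.trans hxz
    have hzpow : z⁻¹ = z ^ α * z ^ (-(1 : ℝ) - α) := by
      rw [← Real.rpow_add hz, add_sub_cancel, Real.rpow_neg_one]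
    have hnear : (2 * z) ^ (-(1 : ℝ) - α) ≤ (z + x) ^ (-(1 : ℝ) - α) :=
      Real.rpow_le_rpow_of_nonpos (by positivity) (by linarith) (by linarith)
    have hfar : (y + r) ^ (-(1 : ℝ) - α) ≤ (y + z) ^ (-(1 : ℝ) - α) :=
      Real.rpow_le_rpow_of_nonpos (by positivity) (by linarith) (by linarith)
    calc α * 2 ^ (-(1 : ℝ) - α) * (y + r) ^ (-(1 : ℝ) - α) * z⁻¹
        = α * z ^ α * (2 * z) ^ (-(1 : ℝ) - α) * (y + r) ^ (-(1 : ℝ) - α) := by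
          rw [hzpow, Real.mul_rpow zero_le_two hz.le]
          ring
      _ ≤ α * z ^ α * (z + x) ^ (-(1 : ℝ) - α) * (y + z) ^ (-(1 : ℝ) - α) := by gcongr
  rw [← integral_inv_of_pos hx hr, intervalIntegral.integral_of_le hxr.le, ← integral_const_mul]
  refine (setIntegral_mono_on (hinv.const_mul _) (hint.mono_set hsub) measurableSet_Ioc
    hpointwise).trans (setIntegral_mono_set hint ?_ hsub.eventuallyLE)
  filter_upwards [ae_restrict_mem measurableSet_Ioi] with z (hz : 0 < z)
  simp only [Pi.zero_apply]
  positivity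

lemma integrableOn_and_integral_inv_mul_inv {r : ℝ} (hx : 0 < x) (hxr : x < r) :
    IntegrableOn (fun z => (z + x)⁻¹ * (z + r)⁻¹) (Ioi 0) ∧
    ∫ z in Ioi (0 : ℝ), (z + x)⁻¹ * (z + r)⁻¹ = Real.log (r / x) / (r - x) := by
  have hr : 0 < r := hx.trans hxr
  have hrx : 0 < r - x := sub_pos.2 hxr
  have hderiv : ∀ z ∈ Ici (0 : ℝ),
      HasDerivAt (fun z => (Real.log (z + x) - Real.log (z + r)) / (r - x))
        ((z + x)⁻¹ * (z + r)⁻¹) z := fun z (hz : 0 ≤ z) => by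
    have h₁ := ((hasDerivAt_id z).add_const x).log (show z + x ≠ 0 by positivity)
    have h₂ := ((hasDerivAt_id z).add_const r).log (show z + r ≠ 0 by positivity)
    refine ((h₁.sub h₂).div_const (r - x)).congr_deriv ?_
    have : 0 < z + x := by positivity
    have : 0 < z + r := by positivity
    simp only [id]
    field_simp
    ring
  have hnonneg : ∀ z ∈ Ioi (0 : ℝ), 0 ≤ (z + x)⁻¹ * (z + r)⁻¹ := fun z (hz : 0 < z) => by
    positivity
  have hlim : Tendsto (fun z => (Real.log (z + x) - Real.log (z + r)) / (r - x)) atTop (𝓝 0) := by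
    have h := ((Real.tendsto_log_comp_add_sub_log x).sub
      (Real.tendsto_log_comp_add_sub_log r)).div_const (r - x)
    simpa only [sub_sub_sub_cancel_right, sub_zero, zero_div] using h
  refine ⟨integrableOn_Ioi_deriv_of_nonneg' hderiv hnonneg hlim, ?_⟩
  rw [integral_Ioi_of_hasDerivAt_of_nonneg' hderiv hnonneg hlim, zero_add, zero_add,
    Real.log_div hr.ne' hx.ne']
  ring

lemma one_sub_div_add_rpow_le {r z : ℝ} (hα : 1 ≤ α) (hr : 0 ≤ r) (hz : 0 < z) :
    1 - (r / (r + z)) ^ α ≤ α * z / (z + r) := by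
  have hneg_one_le : -1 ≤ -(z / (z + r)) :=
    neg_le_neg ((div_le_one (by positivity)).2 (by linarith))
  have hbernoulli := one_add_mul_self_le_rpow_one_add hneg_one_le hα
  have hratio : 1 + -(z / (z + r)) = r / (r + z) := by
    field_simp
    ring
  rw [hratio] at hbernoulli
  rw [mul_div_assoc]
  linarith

lemma log_div_div_sub_le {r : ℝ} (hx : 0 < x) (hxr : x < r) :
    Real.log (r / x) / (r - x) ≤ (1 + Real.log (r / x)) / r := by
  have hlog : x * Real.log (r / x) ≤ r - x := by
    have h := mul_le_mul_of_nonneg_left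
      (Real.log_le_sub_one_of_pos (div_pos (hx.trans hxr) hx)) hx.le
    rwa [mul_sub, mul_div_cancel₀ _ hx.ne', mul_one] at h
  rw [div_le_div_iff₀ (sub_pos.2 hxr) (hx.trans hxr)]
  linarith

lemma integral_Ioi_rpow_mul_complementKernel_le {r : ℝ} (hα : 1 ≤ α) (hx : 0 < x) (hxr : x < r) :
    ∫ y in Ioi r, y ^ (α - 1) * complementKernel α x y ≤ α / r * (1 + Real.log (r / x)) := by
  have hr : 0 < r := hx.trans hxr
  have hα₀ : 0 < α := by linarith
  obtain ⟨hint, hval⟩ := integrableOn_and_integral_inv_mul_inv hx hxr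
  have hpointwise {z : ℝ} (hz : 0 < z) :
      z ^ (α - 1) * (z + x) ^ (-(1 : ℝ) - α) * (1 - (r / (r + z)) ^ α) ≤
        α * ((z + x)⁻¹ * (z + r)⁻¹) :=
    calc z ^ (α - 1) * (z + x) ^ (-(1 : ℝ) - α) * (1 - (r / (r + z)) ^ α)
        ≤ z ^ (α - 1) * (z + x) ^ (-(1 : ℝ) - α) * (α * z / (z + r)) := by
          gcongr
          exact one_sub_div_add_rpow_le hα hr.le hz
      _ = α * ((z ^ α * (z + x) ^ (-(1 : ℝ) - α)) * (z + r)⁻¹) := by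
          rw [Real.rpow_sub_one hz.ne']
          field_simp
      _ ≤ α * ((z + x)⁻¹ * (z + r)⁻¹) := by
          gcongr
          exact rpow_mul_add_rpow_neg_one_sub_le hα₀.le hx hz
  calc ∫ y in Ioi r, y ^ (α - 1) * complementKernel α x y
      = ∫ z in Ioi (0 : ℝ), z ^ (α - 1) * (z + x) ^ (-(1 : ℝ) - α) * (1 - (r / (r + z)) ^ α) :=
        (integrableOn_and_integral_rpow_mul_complementKernel hα₀ hx hr.le).2
    _ ≤ ∫ z in Ioi (0 : ℝ), α * ((z + x)⁻¹ * (z + r)⁻¹) := by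
        refine integral_mono_of_nonneg ?_ (hint.const_mul α) ?_
        · filter_upwards [ae_restrict_mem measurableSet_Ioi] with z (hz : 0 < z)
          exact mul_nonneg (by positivity)
            (sub_nonneg.2 (div_add_rpow_mem_Icc hα₀.le hr.le hz).2)
        · filter_upwards [ae_restrict_mem measurableSet_Ioi] with z (hz : 0 < z)
          exact hpointwise hz
    _ = α * (Real.log (r / x) / (r - x)) := by rw [integral_const_mul, hval]
    _ ≤ α * ((1 + Real.log (r / x)) / r) :=
        mul_le_mul_of_nonneg_left (log_div_div_sub_le hx hxr) hα₀.le
    _ = α / r * (1 + Real.log (r / x)) := by ring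

end ComplementKernel

section CutoffAndBump

variable {η ζ k : ℝ → ℝ} {α r R : ℝ}

/-- A bounded cutoff `η` equal to `1` on `[0, r]` and leaving the value `1` at most quadratically to
the right of `r`; this replaces `η ∈ C_0^∞([0, 2r))`. -/
structure IsQuadraticCutoff (η : ℝ → ℝ) (r : ℝ) : Prop where
  measurable : Measurable η
  bounded : ∃ B, ∀ x, |1 - η x| ≤ B
  eq_one : ∀ x ∈ Icc 0 r, η x = 1
  isBigO : (fun x => 1 - η x) =O[𝓝[>] r] fun x => (x - r) ^ 2

/-- A nonnegative, nonzero integrable function vanishing outside `[r, R]`; this replaces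
`ζ ∈ C_0^∞((r, 2r))`. -/
structure IsBump (ζ : ℝ → ℝ) (r R : ℝ) : Prop where
  integrable : Integrable ζ
  nonneg : ∀ x, 0 ≤ ζ x
  eq_zero : ∀ x ∉ Icc r R, ζ x = 0
  integral_pos : 0 < ∫ x, ζ x

lemma isQuadraticCutoff_of_contDiff (hη : ContDiff ℝ 2 η) (hη01 : ∀ x, 0 ≤ η x ∧ η x ≤ 1)
    (hη1 : ∀ x ∈ Icc 0 r, η x = 1) (hr : 0 ≤ r) : IsQuadraticCutoff η r where
  measurable := hη.continuous.measurable
  bounded := ⟨1, fun x => abs_le.2 ⟨by linarith [(hη01 x).2], by linarith [(hη01 x).1]⟩⟩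
  eq_one := hη1
  isBigO := by
    have hηr : η r = 1 := hη1 r (right_mem_Icc.2 hr)
    have hmax : IsLocalMax η r := .of_forall fun x => (hη01 x).2.trans hηr.ge
    have h := (isBigO_sub_sq_of_deriv_eq_zero hη.contDiffAt hmax.deriv_eq_zero).neg_left
    simp only [neg_sub, hηr] at h
    exact h.mono nhdsWithin_le_nhds

lemma isBump_of_continuous (hζ : Continuous ζ) (hζ0 : ∀ x, 0 ≤ ζ x)
    (hsupp : tsupport ζ ⊆ Icc r R) (hne : ∃ x, ζ x ≠ 0) : IsBump ζ r R := by
  have hcompact : HasCompactSupport ζ := isCompact_Icc.of_isClosed_subset isClosed_closure hsupp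
  obtain ⟨x, hx⟩ := hne
  exact ⟨hζ.integrable_of_hasCompactSupport hcompact, hζ0,
    fun x hx => image_eq_zero_of_notMem_tsupport fun h => hx (hsupp h),
    hζ.integral_pos_of_hasCompactSupport_nonneg_nonzero hcompact hζ0 hx⟩

lemma IsBump.integrable_mul_and_mul_integral_le (hζ : IsBump ζ r R)
    (hk : AntitoneOn k (Icc r R)) (hrR : r ≤ R) :
    Integrable (fun y => ζ y * k y) ∧ k R * ∫ y, ζ y ≤ ∫ y, ζ y * k y := by
  have hbounds : ∀ y ∈ Icc r R, k R ≤ k y ∧ k y ≤ k r := fun y hy =>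
    ⟨hk hy (right_mem_Icc.2 hrR) hy.2, hk (left_mem_Icc.2 hrR) hy hy.1⟩
  have hsupp : Function.support (fun y => ζ y * k y) ⊆ Icc r R := fun y hy => by
    by_contra h
    simp [hζ.eq_zero y h] at hy
  have hint : Integrable fun y => ζ y * k y := by
    rw [← integrableOn_iff_integrable_of_support_subset hsupp]
    refine hζ.integrable.integrableOn.mul_bdd (c := max |k R| |k r|)
      (aemeasurable_restrict_of_antitoneOn measurableSet_Icc hk).aestronglyMeasurable ?_
    filter_upwards [ae_restrict_mem measurableSet_Icc] with y hy
    exact abs_le_max_abs_abs (hbounds y hy).1 (hbounds y hy).2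
  refine ⟨hint, ?_⟩
  rw [← integral_const_mul]
  refine integral_mono (hζ.integrable.const_mul _) hint fun y => ?_
  by_cases hy : y ∈ Icc r R
  · rw [mul_comm]
    exact mul_le_mul_of_nonneg_left (hbounds y hy).1 (hζ.nonneg y)
  · simp [hζ.eq_zero y hy]

lemma isBigO_abs_sub_rpow_atTop (r : ℝ) {β : ℝ} (hβ : β ≤ 0) :
    (fun y => |r - y| ^ β) =O[atTop] fun y => y ^ β := by
  refine .of_bound ((1 / 2) ^ β) ?_
  filter_upwards [eventually_gt_atTop 0, eventually_ge_atTop (2 * r)] with y hy hry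
  rw [Real.norm_of_nonneg (by positivity), Real.norm_of_nonneg (by positivity),
    ← Real.mul_rpow (by norm_num) hy.le]
  refine Real.rpow_le_rpow_of_nonpos (by positivity) ?_ hβ
  rw [abs_sub_comm]
  exact le_abs.2 (Or.inl (by linarith))

lemma integrableAtFilter_sub_rpow {β : ℝ} (hβ : -1 < β) (r : ℝ) :
    IntegrableAtFilter (fun y => (y - r) ^ β) (𝓝[>] r) := by
  have hint := (intervalIntegral.intervalIntegrable_rpow' (a := 0) (b := 1) hβ).comp_sub_right r
  rw [zero_add, intervalIntegrable_iff_integrableOn_Ioc_of_le (by linarith)] at hint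
  exact ⟨_, Ioc_mem_nhdsGT (by linarith), hint⟩

namespace IsQuadraticCutoff

lemma integrableOn_mul_rpow_mul_abs_rpow (hη : IsQuadraticCutoff η r) (hr : 0 < r) (hα : -1 ≤ α)
    (hα₂ : α < 2) :
    IntegrableOn (fun y => (1 - η y) * (y ^ (α - 1) * |r - y| ^ (-(1 : ℝ) - α))) (Ioi r) := by
  obtain ⟨B, hB⟩ := hη.bounded
  have hη_meas := hη.measurable
  have hmeas : Measurable fun y => (1 - η y) * (y ^ (α - 1) * |r - y| ^ (-(1 : ℝ) - α)) := by
    fun_prop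
  refine integrableOn_Ioi_iff_integrableAtFilter_atTop_nhdsWithin.2 ⟨?_, ?_, ?_⟩
  · have hbdd : (fun y => 1 - η y) =O[atTop] fun _ => (1 : ℝ) :=
      .of_bound B (.of_forall fun y => by simpa using hB y)
    refine Asymptotics.IsBigO.integrableAtFilter (g := fun y : ℝ => y ^ (-2 : ℝ)) ?_
      hmeas.stronglyMeasurable.stronglyMeasurableAtFilter
      (integrableAtFilter_rpow_atTop_iff.2 (by norm_num))
    refine (hbdd.mul ((Asymptotics.isBigO_refl (fun y : ℝ => y ^ (α - 1)) _).mul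
      (isBigO_abs_sub_rpow_atTop r (by linarith)))).congr' .rfl ?_
    filter_upwards [eventually_gt_atTop 0] with y hy
    rw [one_mul, ← Real.rpow_add hy]
    ring_nf
  · have hpow : (fun y : ℝ => y ^ (α - 1)) =O[𝓝[>] r] fun _ => (1 : ℝ) :=
      ((Real.continuousAt_rpow_const r (α - 1) (Or.inl hr.ne')).tendsto.isBigO_one ℝ).mono
        nhdsWithin_le_nhds
    refine Asymptotics.IsBigO.integrableAtFilter (g := fun y => (y - r) ^ (1 - α)) ?_
      hmeas.stronglyMeasurable.stronglyMeasurableAtFilter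
      (integrableAtFilter_sub_rpow (by linarith) r)
    refine (hη.isBigO.mul (hpow.mul (Asymptotics.isBigO_refl
      (fun y => |r - y| ^ (-(1 : ℝ) - α)) _))).congr' .rfl ?_
    filter_upwards [self_mem_nhdsWithin] with y (hy : r < y)
    have hyr : 0 < y - r := sub_pos.2 hy
    rw [abs_sub_comm, abs_of_pos hyr, one_mul, ← Real.rpow_two, ← Real.rpow_add hyr]
    ring_nf
  · have hloc : LocallyIntegrable fun y => 1 - η y :=
      (locallyIntegrable_const B).mono (by fun_prop)
        (.of_forall fun y => (hB y).trans (le_abs_self B))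
    refine (hloc.locallyIntegrableOn _).mul_continuousOn (fun y (hy : r < y) => ?_)
      isOpen_Ioi.isLocallyClosed
    have hy₀ : y ≠ 0 := (hr.trans hy).ne'
    have hyr : |r - y| ≠ 0 := abs_ne_zero.2 (sub_ne_zero.2 hy.ne)
    exact ((continuousAt_id.rpow_const (Or.inl hy₀)).mul
      (ContinuousAt.rpow_const (by fun_prop) (Or.inl hyr))).continuousWithinAt

lemma integrableOn_and_integral_Ioi_zero {g : ℝ → ℝ} (hη : IsQuadraticCutoff η r) (hr : 0 ≤ r)
    (hg : IntegrableOn (fun y => (1 - η y) * g y) (Ioi r)) :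
    IntegrableOn (fun y => (1 - η y) * g y) (Ioi 0) ∧
    ∫ y in Ioi 0, (1 - η y) * g y = ∫ y in Ioi r, (1 - η y) * g y := by
  have hzero : ∀ y ∈ Ioi 0 \ Ioi r, (1 - η y) * g y = 0 := fun y hy => by
    rw [hη.eq_one y ⟨le_of_lt hy.1, not_lt.1 hy.2⟩, sub_self, zero_mul]
  exact ⟨hg.of_forall_sdiff_eq_zero measurableSet_Ioi hzero,
    setIntegral_eq_of_subset_of_forall_sdiff_eq_zero measurableSet_Ioi (Ioi_subset_Ioi hr) hzero⟩

lemma exists_integral_mul_abs_rpow_le (hη : IsQuadraticCutoff η r) (hr : 0 < r) (hα : -1 ≤ α)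
    (hα₂ : α < 2) :
    ∃ A, 0 ≤ A ∧ ∀ x ∈ Ioo 0 r,
      IntegrableOn (fun y => (1 - η y) * (y ^ (α - 1) * |x - y| ^ (-(1 : ℝ) - α))) (Ioi 0) ∧
      ∫ y in Ioi 0, (1 - η y) * (y ^ (α - 1) * |x - y| ^ (-(1 : ℝ) - α)) ≤ A := by
  have hη_meas := hη.measurable
  have hdom := (hη.integrableOn_mul_rpow_mul_abs_rpow hr hα hα₂).norm
  refine ⟨∫ y in Ioi r, ‖(1 - η y) * (y ^ (α - 1) * |r - y| ^ (-(1 : ℝ) - α))‖,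
    integral_nonneg fun _ => norm_nonneg _, fun x hx => ?_⟩
  have hle : ∀ᵐ y ∂volume.restrict (Ioi r),
      ‖(1 - η y) * (y ^ (α - 1) * |x - y| ^ (-(1 : ℝ) - α))‖ ≤
        ‖(1 - η y) * (y ^ (α - 1) * |r - y| ^ (-(1 : ℝ) - α))‖ := by
    filter_upwards [ae_restrict_mem measurableSet_Ioi] with y (hy : r < y)
    have hdist : |r - y| ≤ |x - y| := by
      rw [abs_sub_comm, abs_of_pos (by linarith), abs_sub_comm, abs_of_pos (by linarith [hx.2])]
      linarith [hx.2]
    have hpow : |x - y| ^ (-(1 : ℝ) - α) ≤ |r - y| ^ (-(1 : ℝ) - α) :=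
      Real.rpow_le_rpow_of_nonpos (abs_pos.2 (by linarith)) hdist (by linarith)
    simp only [norm_mul, Real.norm_of_nonneg (Real.rpow_nonneg (abs_nonneg _) _)]
    gcongr
  have hint : IntegrableOn (fun y => (1 - η y) * (y ^ (α - 1) * |x - y| ^ (-(1 : ℝ) - α)))
      (Ioi r) := hdom.mono' (Measurable.aestronglyMeasurable (by fun_prop)) hle
  obtain ⟨hint₀, heq⟩ := hη.integrableOn_and_integral_Ioi_zero hr.le hint
  refine ⟨hint₀, heq.trans_le (integral_mono_ae hint hdom ?_)⟩
  filter_upwards [hle] with y hy using (le_abs_self _).trans hy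

lemma exists_integral_mul_complementKernel_le (hη : IsQuadraticCutoff η r) (hr : 0 < r)
    (hα : 1 ≤ α) :
    ∃ A, 0 ≤ A ∧ ∀ x ∈ Ioo 0 r,
      IntegrableOn (fun y => (1 - η y) * (y ^ (α - 1) * complementKernel α x y)) (Ioi 0) ∧
      ∫ y in Ioi 0, (1 - η y) * (y ^ (α - 1) * complementKernel α x y) ≤
        A * (1 + Real.log (r / x)) := by
  obtain ⟨B, hB⟩ := hη.bounded
  have hη_meas := hη.measurable
  have hB₀ : 0 ≤ B := (abs_nonneg _).trans (hB 0)
  refine ⟨B * (α / r), by positivity, fun x ⟨hx, hxr⟩ => ?_⟩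
  have hα₀ : 0 < α := by linarith
  have hκ := (integrableOn_and_integral_rpow_mul_complementKernel hα₀ hx hr.le).1
  have hint := hκ.bdd_mul (f := fun y => 1 - η y) (by fun_prop) (.of_forall hB)
  obtain ⟨hint₀, heq⟩ := hη.integrableOn_and_integral_Ioi_zero hr.le hint
  refine ⟨hint₀, ?_⟩
  calc ∫ y in Ioi 0, (1 - η y) * (y ^ (α - 1) * complementKernel α x y)
      = ∫ y in Ioi r, (1 - η y) * (y ^ (α - 1) * complementKernel α x y) := heq
    _ ≤ ∫ y in Ioi r, B * (y ^ (α - 1) * complementKernel α x y) := by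
        refine setIntegral_mono_on hint (hκ.const_mul B) measurableSet_Ioi fun y (hy : r < y) => ?_
        have hy₀ : 0 < y := hr.trans hy
        have := complementKernel_nonneg hα₀.le hx hy₀
        gcongr
        exact (le_abs_self _).trans (hB y)
    _ = B * ∫ y in Ioi r, y ^ (α - 1) * complementKernel α x y := integral_const_mul _ _
    _ ≤ B * (α / r * (1 + Real.log (r / x))) := by
        gcongr
        exact integral_Ioi_rpow_mul_complementKernel_le hα hx hxr
    _ = B * (α / r) * (1 + Real.log (r / x)) := (mul_assoc _ _ _).symm

end IsQuadraticCutoff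

end CutoffAndBump

section Subsolution

variable {K : ℝ → ℝ → ℝ} {u w η ζ : ℝ → ℝ} {a b r s x α R : ℝ}

lemma exists_pos_forall_hasPV1_le (hrR : r ≤ R) (hη : ∀ x ∈ Ioo 0 r, η x = 1)
    (hζ : IsBump ζ r R) (hb : 0 < b) (hw : ∀ x ∈ Ioo 0 r, 0 ≤ w x)
    (hharm : ∀ x ∈ Ioo 0 r, IsPVHarmonicAt K u x)
    (hanti : ∀ x ∈ Ioo 0 r, AntitoneOn (K x) (Icc r R))
    (hlower : ∀ x ∈ Ioo 0 r, b * w x ≤ K x R)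
    (hcut : ∀ x ∈ Ioo 0 r, IntegrableOn (fun y => (1 - η y) * (u y * K x y)) (Ioi 0) ∧
      ∫ y in Ioi 0, (1 - η y) * (u y * K x y) ≤ a * w x) (c : ℝ) :
    ∃ M > 0, ∀ x ∈ Ioo 0 r, ∃ l,
      HasPV1 K (fun t => η t * u t + M * ζ t) x l ∧ l ≤ -(c * w x) := by
  have hmass := hζ.integral_pos
  obtain ⟨M, hMpos, hM⟩ : ∃ M > 0, (a + c) / (b * ∫ y, ζ y) ≤ M :=
    ⟨max 1 _, by positivity, le_max_right _ _⟩
  rw [div_le_iff₀ (by positivity)] at hM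
  refine ⟨M, hMpos, fun x hx => ?_⟩
  obtain ⟨hcut_int, hcut_le⟩ := hcut x hx
  obtain ⟨hbump_int, hbump_le⟩ := hζ.integrable_mul_and_mul_integral_le (hanti x hx) hrR
  have hbump_eq : ∫ y in Ioi 0, ζ y * K x y = ∫ y, ζ y * K x y :=
    setIntegral_eq_integral_of_forall_compl_eq_zero fun y hy => by
      rw [hζ.eq_zero y fun h => hy (hx.1.trans (hx.2.trans_le h.1)), zero_mul]
  have hbump : b * w x * ∫ y, ζ y ≤ ∫ y in Ioi 0, ζ y * K x y := by
    rw [hbump_eq]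
    exact (mul_le_mul_of_nonneg_right (hlower x hx) hmass.le).trans hbump_le
  let v : ℝ → ℝ := fun t => M * ζ t - (1 - η t) * u t
  have hvK : (fun y => v y * K x y) =
      fun y => M * (ζ y * K x y) - (1 - η y) * (u y * K x y) := by
    ext y
    ring
  have hvx : v x = 0 := by
    simp only [v, hη x hx, hζ.eq_zero x fun h => hx.2.not_ge h.1]
    ring
  have hv_int := (hbump_int.integrableOn (s := Ioi 0)).const_mul M |>.sub hcut_int
  have hPV := (hharm x hx).hasPV1_add hvx (hvK ▸ hv_int)
  refine ⟨-∫ y in Ioi 0, v y * K x y, ?_, neg_le_neg ?_⟩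
  · convert hPV using 2
    ring
  · rw [hvK, integral_sub (hbump_int.integrableOn.const_mul M) hcut_int, integral_const_mul]
    nlinarith [mul_le_mul_of_nonneg_left hbump hMpos.le, mul_le_mul_of_nonneg_right hM (hw x hx)]

lemma antitoneOn_abs_sub_rpow {β : ℝ} (hβ : β ≤ 0) (x : ℝ) :
    AntitoneOn (fun y => |x - y| ^ β) (Ioi x) := fun y (hy : x < y) z (hz : x < z) hyz => by
  simp only [abs_sub_comm x, abs_of_pos (sub_pos.2 hy), abs_of_pos (sub_pos.2 hz)]
  exact Real.rpow_le_rpow_of_nonpos (sub_pos.2 hy) (by linarith) hβ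

lemma rpow_le_abs_sub_rpow {β : ℝ} (hβ : β ≤ 0) (hx : 0 ≤ x) (hxR : x < R) :
    R ^ β ≤ |x - R| ^ β := by
  rw [abs_sub_comm, abs_of_pos (sub_pos.2 hxR)]
  exact Real.rpow_le_rpow_of_nonpos (sub_pos.2 hxR) (by linarith) hβ

lemma exists_pos_forall_hasPV1_abs_rpow_le (hr : 0 < r) (hrR : r ≤ R) (hα : 1 ≤ α) (hα₂ : α < 2)
    (hη : IsQuadraticCutoff η r) (hζ : IsBump ζ r R) (c : ℝ) :
    ∃ M > 0, ∀ x ∈ Ioo 0 r, ∃ l,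
      HasPV1 (fun x y => |x - y| ^ (-(1 : ℝ) - α))
        (fun t => η t * t ^ (α - 1) + M * ζ t) x l ∧ l ≤ -c := by
  obtain ⟨A, -, hA⟩ := hη.exists_integral_mul_abs_rpow_le hr (by linarith) hα₂
  have hR : 0 < R := hr.trans_le hrR
  simpa only [mul_one] using exists_pos_forall_hasPV1_le (w := fun _ => 1) hrR
    (fun x hx => hη.eq_one x (Ioo_subset_Icc_self hx)) hζ
    (Real.rpow_pos_of_pos hR (-(1 : ℝ) - α)) (fun _ _ => zero_le_one)
    (fun x hx => isPVHarmonicAt_rpow hα hα₂ hx.1)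
    (fun x hx => (antitoneOn_abs_sub_rpow (by linarith) x).mono fun y hy => hx.2.trans_le hy.1)
    (fun x hx => by
      simpa using rpow_le_abs_sub_rpow (by linarith) hx.1.le (hx.2.trans_le hrR))
    (fun x hx => by simpa only [mul_one] using hA x hx) c

lemma exists_pos_forall_hasPV1_add_complementKernel_le (hr : 0 < r) (hrR : r ≤ R) (hα : 1 ≤ α)
    (hα₂ : α < 2) (hη : IsQuadraticCutoff η r) (hζ : IsBump ζ r R) (c : ℝ) :
    ∃ M > 0, ∀ x ∈ Ioo 0 r, ∃ l,
      HasPV1 (fun x y => |x - y| ^ (-(1 : ℝ) - α) + complementKernel α x y)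
        (fun t => η t * t ^ (α - 1) + M * ζ t) x l ∧ l ≤ -(c * (1 + Real.log (r / x))) := by
  obtain ⟨A₁, hA₁pos, hA₁⟩ := hη.exists_integral_mul_abs_rpow_le hr (by linarith) hα₂
  obtain ⟨A₂, -, hA₂⟩ := hη.exists_integral_mul_complementKernel_le hr hα
  have hR : 0 < R := hr.trans_le hrR
  have hα₀ : 0 < α := by linarith
  have hlog : ∀ x ∈ Ioo 0 r, 0 ≤ Real.log (r / x) := fun x hx =>
    Real.log_nonneg ((one_le_div hx.1).2 hx.2.le)
  set b₁ : ℝ := R ^ (-(1 : ℝ) - α)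
  set b₂ : ℝ := α * 2 ^ (-(1 : ℝ) - α) * (R + r) ^ (-(1 : ℝ) - α)
  refine exists_pos_forall_hasPV1_le (a := A₁ + A₂) (b := min b₁ b₂) hrR
    (fun x hx => hη.eq_one x (Ioo_subset_Icc_self hx)) hζ (by positivity)
    (fun x hx => by linarith [hlog x hx])
    (fun x hx => (isPVHarmonicAt_rpow hα hα₂ hx.1).add
      (isPVHarmonicAt_complementKernel_rpow hα₀ hx.1)) ?_ ?_ ?_ c
  · intro x hx
    exact ((antitoneOn_abs_sub_rpow (by linarith) x).mono fun y hy => hx.2.trans_le hy.1).add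
      ((antitoneOn_complementKernel hα₀ hx.1).mono fun y hy => hr.trans_le hy.1)
  · intro x hx
    have h₁ : b₁ ≤ |x - R| ^ (-(1 : ℝ) - α) :=
      rpow_le_abs_sub_rpow (by linarith) hx.1.le (hx.2.trans_le hrR)
    have h₂ := mul_log_le_complementKernel hα₀ hx.1 hx.2 hR
    calc min b₁ b₂ * (1 + Real.log (r / x))
        = min b₁ b₂ + min b₁ b₂ * Real.log (r / x) := by ring
      _ ≤ b₁ + b₂ * Real.log (r / x) := by
          gcongr
          exacts [min_le_left _ _, hlog x hx, min_le_right _ _]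
      _ ≤ _ := add_le_add h₁ h₂
  · intro x hx
    obtain ⟨hint₁, hle₁⟩ := hA₁ x hx
    obtain ⟨hint₂, hle₂⟩ := hA₂ x hx
    simp only [mul_add]
    refine ⟨hint₁.add hint₂, (integral_add hint₁ hint₂).trans_le ?_⟩
    nlinarith [mul_nonneg hA₁pos (hlog x hx)]

lemma cNs_pos (N : ℕ) (hs : s ∈ Ioo 0 1) : 0 < cNs N s := by
  have hΓ : Real.Gamma (-s) ≠ 0 := Real.Gamma_ne_zero fun m hm => by
    have hm₀ : (0 : ℝ) < m := by linarith [hs.1]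
    have hm₁ : (m : ℝ) < 1 := by linarith [hs.2]
    norm_cast at hm₀ hm₁
    lia
  have hΓ' : 0 < Real.Gamma (N / 2 + s) :=
    Real.Gamma_pos_of_pos (by linarith [hs.1, N.cast_nonneg (α := ℝ)])
  unfold cNs
  positivity

lemma logNeg_div_eq_log (hx : 0 < x) (hxr : x ≤ r) : logNeg (x / r) = Real.log (r / x) := by
  rw [logNeg, ← Real.log_inv, inv_div, max_eq_right]
  exact Real.log_nonneg ((one_le_div hx).2 hxr)

theorem exists_pos_forall_hasPV1_regionalKer1_le (hs : s ∈ Ico (1 / 2) 1) (hr : 0 < r)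
    (hrR : r ≤ R) (hη : IsQuadraticCutoff η r) (hζ : IsBump ζ r R) (c : ℝ) :
    ∃ M > 0, ∀ x ∈ Ioo 0 r, ∃ l,
      HasPV1 (regionalKer1 s) (fun t => η t * t ^ (2 * s - 1) + M * ζ t) x l ∧ l ≤ -c := by
  have hcNs := cNs_pos 1 ⟨by linarith [hs.1], hs.2⟩
  obtain ⟨M, hM, hPV⟩ := exists_pos_forall_hasPV1_abs_rpow_le hr hrR
    (α := 2 * s) (by linarith [hs.1]) (by linarith [hs.2]) hη hζ (c / cNs 1 s)
  refine ⟨M, hM, fun x hx => ?_⟩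
  obtain ⟨l, hl, hle⟩ := hPV x hx
  refine ⟨cNs 1 s * l, hl.const_mul _, ?_⟩
  calc cNs 1 s * l ≤ cNs 1 s * -(c / cNs 1 s) := by gcongr
    _ = -c := by field_simp

theorem exists_pos_forall_hasPV1_neumannKer1_le (hs : s ∈ Ico (1 / 2) 1) (hr : 0 < r)
    (hrR : r ≤ R) (hη : IsQuadraticCutoff η r) (hζ : IsBump ζ r R) (c : ℝ) :
    ∃ M > 0, ∀ x ∈ Ioo 0 r, ∃ l,
      HasPV1 (neumannKer1 s) (fun t => η t * t ^ (2 * s - 1) + M * ζ t) x l ∧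
        l ≤ -(c * (1 + logNeg (x / r))) := by
  have hs₀ : 0 < s := by linarith [hs.1]
  have hcNs := cNs_pos 1 ⟨hs₀, hs.2⟩
  obtain ⟨M, hM, hPV⟩ := exists_pos_forall_hasPV1_add_complementKernel_le hr hrR
    (α := 2 * s) (by linarith [hs.1]) (by linarith [hs.2]) hη hζ (c / cNs 1 s)
  refine ⟨M, hM, fun x hx => ?_⟩
  obtain ⟨l, hl, hle⟩ := hPV x hx
  have hker : EqOn
      (fun y => cNs 1 s * (|x - y| ^ (-(1 : ℝ) - 2 * s) + complementKernel (2 * s) x y))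
      (neumannKer1 s x) (Ioi 0) := fun y hy => by
    rw [neumannKer1, k1_eq_mul_complementKernel hs₀ hx.1 hy, ← mul_add]
  refine ⟨cNs 1 s * l, (hl.const_mul _).congr_kernel hker, ?_⟩
  rw [logNeg_div_eq_log hx.1 hx.2.le]
  calc cNs 1 s * l ≤ cNs 1 s * -(c / cNs 1 s * (1 + Real.log (r / x))) := by gcongr
    _ = -(c * (1 + Real.log (r / x))) := by field_simp

theorem one_dim_subsolution_general (hs : s ∈ Ico (1 / 2) 1) (hr : 0 < r) (hrR : r ≤ R)
    (hK : K = neumannKer1 s ∨ K = regionalKer1 s) (hη : IsQuadraticCutoff η r)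
    (hζ : IsBump ζ r R) :
    ∀ c ≥ 0, ∃ M > 0, ∀ x ∈ Ioo 0 r, ∃ l,
      HasPV1 K (fun t => η t * t ^ (2 * s - 1) + M * ζ t) x l ∧ l ≤ -c ∧
      (K = neumannKer1 s → l ≤ -(c * (1 + logNeg (x / r)))) := by
  intro c hc
  by_cases hneumann : K = neumannKer1 s
  · obtain ⟨M, hM, hPV⟩ := exists_pos_forall_hasPV1_neumannKer1_le hs hr hrR hη hζ c
    refine ⟨M, hM, fun x hx => ?_⟩
    obtain ⟨l, hl, hle⟩ := hPV x hx
    have hlogNeg : 0 ≤ logNeg (x / r) := le_max_left _ _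
    exact ⟨l, hneumann ▸ hl, by nlinarith, fun _ => hle⟩
  · obtain ⟨M, hM, hPV⟩ := exists_pos_forall_hasPV1_regionalKer1_le hs hr hrR hη hζ c
    refine ⟨M, hM, fun x hx => ?_⟩
    obtain ⟨l, hl, hle⟩ := hPV x hx
    exact ⟨l, hK.resolve_left hneumann ▸ hl, hle, fun h => absurd h hneumann⟩

end Subsolution

/-- **1D subsolution** (Lemma 5.3): for suitable `M > 0`, the function
`φ̲(x) = η(x) x^{2s-1} + M ζ(x)` satisfies `L_Ω φ̲ ≤ -c̲` in `(0,r₀)`, with the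
logarithmic improvement `L_Ω φ̲ ≤ -c̲ (1 + log⁻(x/r₀))` for the Neumann kernel. -/
theorem one_dim_subsolution
    (s r₀ : ℝ) (hs : s ∈ Set.Ioo (1 / 2 : ℝ) 1) (hr₀ : 0 < r₀)
    (K : ℝ → ℝ → ℝ) (hK : K = neumannKer1 s ∨ K = regionalKer1 s)
    (η ζ : ℝ → ℝ)
    (hη : ContDiff ℝ (⊤ : ℕ∞) η) (hη01 : ∀ x, 0 ≤ η x ∧ η x ≤ 1)
    (hη1 : ∀ x ∈ Set.Icc (0:ℝ) r₀, η x = 1) (hηsupp : ∀ x : ℝ, 2 * r₀ ≤ x → η x = 0)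
    (hζ : ContDiff ℝ (⊤ : ℕ∞) ζ) (hζ01 : ∀ x, 0 ≤ ζ x ∧ ζ x ≤ 1)
    (hζsupp : tsupport ζ ⊆ Set.Ioo r₀ (2 * r₀)) (hζne : ∃ x, ζ x ≠ 0) :
    ∀ c ≥ (0:ℝ), ∃ M > (0:ℝ), ∀ x ∈ Set.Ioo (0:ℝ) r₀, ∃ l : ℝ,
      HasPV1 K (fun t => η t * t ^ (2 * s - 1) + M * ζ t) x l ∧ l ≤ -c ∧
      (K = neumannKer1 s → l ≤ -(c * (1 + logNeg (x / r₀)))) := by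
  exact one_dim_subsolution_general (R := 2 * r₀) (Ioo_subset_Ico_self hs) hr₀ (by linarith) hK
    (isQuadraticCutoff_of_contDiff (contDiff_infty.1 hη 2) hη01 hη1 hr₀.le)
    (isBump_of_continuous hζ.continuous (fun x => (hζ01 x).1)
      (hζsupp.trans Ioo_subset_Icc_self) hζne)

end
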